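/- arXiv:2308.02709 — 2 statements merged into one kernel-verified Lean document; each statement's English description precedes it below -/
import Mathlib

section
/- (Equivalence of the original and pruned upper-bound LPs) The optimal value of the original upper-bound LP, max{ Σ_{r ∈ R_Q} q_r : Σ_{r ∈ R_{v_B.v_A}} q_r = p_{v_B.v_A} for all (v_A, v_B), q ≥ 0 }, equals the optimal value of the pruned LP, max{ Σ_{h ∈ H} c_h^U q_h : Σ_{h ∈ H: h(v_A) = v_B} q_h = p_{v_B.v_A} for all (v_A, v_B), q ≥ 0 }, where c_h^U = 1{R_h ∩ R_Q ≠ ∅}. -/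
open Classical

/-- A partitioned causal graph on binary variables `V_0, …, V_{n-1}`, listed in
topologically sorted order.  Indices `< a` form the index set `A` (context
variables, which have no parents and topologically precede the rest), indices
`≥ a` form the index set `B`.  `parents j` is the set of indices of `pa(V_j)`. -/
structure CausalGraph where
  n : ℕ
  a : ℕ
  a_le : a ≤ n
  parents : Fin n → Finset (Fin n)
  sorted : ∀ j i : Fin n, i ∈ parents j → i < j
  noParentsA : ∀ j : Fin n, j.val < a → parents j = ∅

namespace CausalGraph

variable (G : CausalGraph)

/-- Indices of the `A` (context) variables. -/
abbrev AIdx := {i : Fin G.n // i.val < G.a}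

/-- Indices of the `B` variables. -/
abbrev BIdx := {i : Fin G.n // G.a ≤ i.val}

/-- Assignments of binary values to the `A` variables (`{0,1}^{|A|}`). -/
abbrev AAssign := G.AIdx → Bool

/-- Assignments of binary values to the `B` variables (`{0,1}^{|B|}`). -/
abbrev BAssign := G.BIdx → Bool

/-- A family of candidate response functions, one for each node, each reading a
full assignment of all variables. -/
abbrev Resp := Fin G.n → ((Fin G.n → Bool) → Bool)

/-- A response family is admissible when each component depends only on the
values of the parents of the corresponding node.  This encodes membership in
`R = ∏_{j∈B} F_j`, where `F_j` is the set of ALL functions from values of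
`pa(V_j)` to `{0,1}`. -/
def IsResponse (r : G.Resp) : Prop :=
  ∀ j : Fin G.n, ∀ v w : Fin G.n → Bool, (∀ i ∈ G.parents j, v i = w i) → r j v = r j w

/-- The response-function set `R`. -/
def R : Set G.Resp := {r | G.IsResponse r}

/-- One step of evaluation: `A` variables read the context, `B` variables apply
their response functions to the current assignment. -/
def evalStep (r : G.Resp) (vA : G.AAssign) (v : Fin G.n → Bool) : Fin G.n → Bool :=
  fun j => if h : j.val < G.a then vA ⟨j, h⟩ else r j v

/-- Evaluation of all variables from the context `vA` and the response family
`r`, in topological order (realized by `n`-fold iteration of `evalStep`, which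
is exact since each parent index precedes its child's index). -/
def eval (r : G.Resp) (vA : G.AAssign) : Fin G.n → Bool :=
  (G.evalStep r vA)^[G.n] (fun _ => false)

/-- `F_B(v_A, r)`: the values of the `B` variables determined by `v_A` and `r`. -/
def FB (r : G.Resp) (vA : G.AAssign) : G.BAssign := fun j => G.eval r vA j.1

/-- A hyperarc `h : {0,1}^{|A|} → {0,1}^{|B|}`. -/
abbrev Hyperarc := G.AAssign → G.BAssign

/-- `R_h`: the admissible responses consistent with hyperarc `h` on every input. -/
def Rh (h : G.Hyperarc) : Set G.Resp :=
  {r ∈ G.R | ∀ vA : G.AAssign, G.FB r vA = h vA}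

/-- A hyperarc is valid when `R_h ≠ ∅`. -/
def Valid (h : G.Hyperarc) : Prop := (G.Rh h).Nonempty

/-- The set `H` of valid hyperarcs. -/
def H : Set G.Hyperarc := {h | G.Valid h}

/-- `R_{v_B.v_A}`: responses mapping the context `v_A` to the values `v_B` of `V_B`. -/
def RvBvA (vA : G.AAssign) (vB : G.BAssign) : Set G.Resp :=
  {r ∈ G.R | G.FB r vA = vB}

/-- Restriction of a full assignment to the `A` variables. -/
def restrictA (v : Fin G.n → Bool) : G.AAssign := fun i => v i.1

/-- Restriction of a full assignment to the `B` variables. -/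
def restrictB (v : Fin G.n → Bool) : G.BAssign := fun j => v j.1

/-- The full assignment determined by a context `vA` and a hyperarc `h`. -/
def extendA (h : G.Hyperarc) (vA : G.AAssign) : Fin G.n → Bool :=
  fun i => if hi : i.val < G.a then vA ⟨i, hi⟩ else h vA ⟨i, not_lt.mp hi⟩

/-- One step of evaluation under the intervention `do(V_I = q_I)`: the
mechanisms of the intervened variables are ignored. -/
def evalDoStep (I : Finset (Fin G.n)) (qI : Fin G.n → Bool) (r : G.Resp)
    (qA : G.AAssign) (v : Fin G.n → Bool) : Fin G.n → Bool :=
  fun j => if h : j.val < G.a then qA ⟨j, h⟩ else if j ∈ I then qI j else r j v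

/-- Evaluation of all variables under the intervention `do(V_I = q_I)`,
in context `V_A = q_A`, using the response family `r`. -/
def evalDo (I : Finset (Fin G.n)) (qI : Fin G.n → Bool) (r : G.Resp)
    (qA : G.AAssign) : Fin G.n → Bool :=
  (G.evalDoStep I qI r qA)^[G.n] (fun _ => false)

/-- A causal query `P(V_O(V_I = q_I) = q_O | V_A = q_A)`: disjoint sets
`O, I ⊆ B` together with the values `q_A`, `q_I`, `q_O`. -/
structure Query (G : CausalGraph) where
  O : Finset (Fin G.n)
  I : Finset (Fin G.n)
  O_sub : ∀ j ∈ O, G.a ≤ j.val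
  I_sub : ∀ j ∈ I, G.a ≤ j.val
  disjOI : Disjoint O I
  qA : G.AAssign
  qI : Fin G.n → Bool
  qO : Fin G.n → Bool

/-- `R_Q`: the admissible responses consistent with the query, i.e. those with
`F_O((q_A, q_I), r) = q_O`. -/
def RQ (Q : G.Query) : Set G.Resp :=
  {r ∈ G.R | ∀ j ∈ Q.O, G.evalDo Q.I Q.qI r Q.qA j = Q.qO j}

/-- Edges of the mutilated graph `G^{do(V_I = q_I)}` (all edges into `V_I` deleted). -/
def doEdge (I : Finset (Fin G.n)) (i j : Fin G.n) : Prop := j ∉ I ∧ i ∈ G.parents j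

/-- `C(Q)`: the critical variables for the query, i.e. those with a directed
path to some variable of `V_O` in the mutilated graph `G^{do(V_I = q_I)}`. -/
def critical (Q : G.Query) : Set (Fin G.n) :=
  {i | ∃ o ∈ Q.O, Relation.ReflTransGen (G.doEdge Q.I) i o}

/-- An observation `{V_W = q_W}` with `W ⊆ B`, in context `V_A = q_A`. -/
structure Obs (G : CausalGraph) where
  W : Finset (Fin G.n)
  W_sub : ∀ j ∈ W, G.a ≤ j.val
  qA : G.AAssign
  qW : Fin G.n → Bool

/-- `R_W`: the admissible responses consistent with the observation, i.e. those
with `F_W(q_A, r) = q_W`. -/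
def RW (Ob : G.Obs) : Set G.Resp :=
  {r ∈ G.R | ∀ j ∈ Ob.W, G.eval r Ob.qA j = Ob.qW j}

/-- Edges of the causal graph `G` itself. -/
def edge (i j : Fin G.n) : Prop := i ∈ G.parents j

/-- `C(W)`: the critical variables for the observation: the `A`-variables with
a directed path in `G` to some variable of `V_W`. -/
def criticalW (Ob : G.Obs) : Set (Fin G.n) :=
  {i | i.val < G.a ∧ ∃ w ∈ Ob.W, Relation.ReflTransGen G.edge i w}

end CausalGraph

open CausalGraph

/-- The sum `Σ_{x ∈ s} f x` of `f` over a subset `s` of a finite type. -/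
noncomputable def setSum {α : Type*} [Fintype α] (s : Set α) (f : α → ℝ) : ℝ :=
  ∑ x : α, if x ∈ s then f x else 0
lemma setSum_eq_sum_filter {α : Type*} [Fintype α] (s : Set α) (f : α → ℝ) :
    setSum s f = ∑ x with x ∈ s, f x :=
  (Finset.sum_filter _ _).symm

namespace CausalGraph

variable (G : CausalGraph)

lemma mem_Rh_iff (h : G.Hyperarc) (r : G.Resp) : r ∈ G.Rh h ↔ r ∈ G.R ∧ G.FB r = h := by
  simp [Rh, funext_iff]

lemma FB_mem_H {r : G.Resp} (hr : r ∈ G.R) : G.FB r ∈ G.H :=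
  ⟨r, (G.mem_Rh_iff _ _).2 ⟨hr, rfl⟩⟩

/-- Summing the masses of the classes `R_h` over the valid hyperarcs satisfying `P` amounts to
summing over the admissible responses whose induced hyperarc satisfies `P`. -/
lemma setSum_H_setSum_Rh (P : G.Hyperarc → Prop) (q : G.Resp → ℝ) :
    setSum {h ∈ G.H | P h} (fun h => setSum (G.Rh h) q) =
      setSum {r ∈ G.R | P (G.FB r)} q := by
  simp only [setSum_eq_sum_filter]
  rw [Finset.sum_sigma']
  refine Finset.sum_bij' (fun x _ => x.2) (fun r _ => ⟨G.FB r, r⟩) ?_ ?_ ?_ ?_ ?_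
  · rintro ⟨h, r⟩ hx
    simp only [Finset.mem_sigma, Finset.mem_filter, Finset.mem_univ, true_and, Set.mem_ofPred_eq,
      mem_Rh_iff] at hx ⊢
    obtain ⟨⟨-, hP⟩, hr, rfl⟩ := hx
    exact ⟨hr, hP⟩
  · intro r hr
    simp only [Finset.mem_sigma, Finset.mem_filter, Finset.mem_univ, true_and, Set.mem_ofPred_eq,
      mem_Rh_iff, and_true] at hr ⊢
    exact ⟨⟨G.FB_mem_H hr.1, hr.2⟩, hr.1⟩
  · rintro ⟨h, r⟩ hx
    simp only [Finset.mem_sigma, Finset.mem_filter, Finset.mem_univ, true_and,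
      mem_Rh_iff] at hx
    obtain ⟨-, -, rfl⟩ := hx
    rfl
  · intro r _
    rfl
  · intro x _
    rfl

/-- Each valid hyperarc has a representative response, which lies in `R_Q` whenever `R_h`
meets `R_Q`. -/
lemma exists_representative (Q : G.Query) :
    ∃ s : G.Hyperarc → G.Resp, ∀ h ∈ G.H, s h ∈ G.Rh h ∧
      ((G.Rh h ∩ G.RQ Q).Nonempty → s h ∈ G.RQ Q) := by
  have key : ∀ h, ∃ r : G.Resp, h ∈ G.H → r ∈ G.Rh h ∧
      ((G.Rh h ∩ G.RQ Q).Nonempty → r ∈ G.RQ Q) := by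
    intro h
    by_cases hQ : (G.Rh h ∩ G.RQ Q).Nonempty
    · obtain ⟨r, hr, hrQ⟩ := hQ
      exact ⟨r, fun _ => ⟨hr, fun _ => hrQ⟩⟩
    · by_cases hH : h ∈ G.H
      · obtain ⟨r, hr⟩ := hH
        exact ⟨r, fun _ => ⟨hr, fun h' => absurd h' hQ⟩⟩
      · exact ⟨fun _ _ => false, fun h' => absurd h' hH⟩
  choose s hs using key
  exact ⟨s, hs⟩

lemma exists_hyperarc_feasible (Q : G.Query) (p : G.AAssign → G.BAssign → ℝ)
    (q : G.Resp → ℝ) (hq : ∀ r, 0 ≤ q r)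
    (hp : ∀ (vA : G.AAssign) (vB : G.BAssign), setSum (G.RvBvA vA vB) q = p vA vB) :
    ∃ qh : G.Hyperarc → ℝ, (∀ h, 0 ≤ qh h) ∧
      (∀ (vA : G.AAssign) (vB : G.BAssign),
        setSum {h ∈ G.H | h vA = vB} qh = p vA vB) ∧
      setSum (G.RQ Q) q ≤ setSum {h ∈ G.H | (G.Rh h ∩ G.RQ Q).Nonempty} qh := by
  refine ⟨fun h => setSum (G.Rh h) q, fun h => ?_, fun vA vB => ?_, ?_⟩
  · exact Finset.sum_nonneg fun r _ => by split_ifs <;> simp [hq]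
  · rw [G.setSum_H_setSum_Rh (fun h => h vA = vB) q]
    exact hp vA vB
  · rw [G.setSum_H_setSum_Rh (fun h => (G.Rh h ∩ G.RQ Q).Nonempty) q]
    refine Finset.sum_le_sum fun r _ => ?_
    by_cases hr : r ∈ G.RQ Q
    · have hr' : r ∈ {r ∈ G.R | (G.Rh (G.FB r) ∩ G.RQ Q).Nonempty} :=
        ⟨hr.1, r, (G.mem_Rh_iff _ _).2 ⟨hr.1, rfl⟩, hr⟩
      rw [if_pos hr, if_pos hr']
    · rw [if_neg hr]
      split_ifs <;> simp [hq]

lemma exists_response_feasible (Q : G.Query) (p : G.AAssign → G.BAssign → ℝ)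
    (qh : G.Hyperarc → ℝ) (hqh : ∀ h, 0 ≤ qh h)
    (hp : ∀ (vA : G.AAssign) (vB : G.BAssign),
      setSum {h ∈ G.H | h vA = vB} qh = p vA vB) :
    ∃ q : G.Resp → ℝ, (∀ r, 0 ≤ q r) ∧
      (∀ (vA : G.AAssign) (vB : G.BAssign), setSum (G.RvBvA vA vB) q = p vA vB) ∧
      setSum {h ∈ G.H | (G.Rh h ∩ G.RQ Q).Nonempty} qh ≤ setSum (G.RQ Q) q := by
  obtain ⟨s, hs⟩ := G.exists_representative Q
  let q : G.Resp → ℝ := fun r => if s (G.FB r) = r then qh (G.FB r) else 0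
  have hq : ∀ r, 0 ≤ q r := fun r => by
    dsimp only [q]
    split_ifs <;> simp [hqh]
  have hclass : ∀ h ∈ G.H, setSum (G.Rh h) q = qh h := by
    intro h hh
    obtain ⟨hR, hFB⟩ := (G.mem_Rh_iff _ _).1 (hs h hh).1
    unfold setSum
    rw [Finset.sum_eq_single (s h)]
    · rw [if_pos (hs h hh).1]
      simp [q, hFB]
    · intro r _ hr
      split_ifs with hrh
      · have hrFB := ((G.mem_Rh_iff _ _).1 hrh).2
        simp only [q, hrFB, if_neg hr.symm]
      · rfl
    · simp
  have hsum : ∀ P : G.Hyperarc → Prop,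
      setSum {h ∈ G.H | P h} qh = setSum {r ∈ G.R | P (G.FB r)} q := by
    intro P
    rw [← G.setSum_H_setSum_Rh]
    refine Finset.sum_congr rfl fun h _ => ?_
    split_ifs with hh
    · exact (hclass h hh.1).symm
    · rfl
  refine ⟨q, hq, fun vA vB => ?_, ?_⟩
  · rw [← hp, hsum fun h => h vA = vB]
    rfl
  · rw [hsum fun h => (G.Rh h ∩ G.RQ Q).Nonempty]
    refine Finset.sum_le_sum fun r _ => ?_
    by_cases hr : r ∈ {r ∈ G.R | (G.Rh (G.FB r) ∩ G.RQ Q).Nonempty}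
    · rw [if_pos hr]
      by_cases hsr : s (G.FB r) = r
      · have hrQ := (hs _ (G.FB_mem_H hr.1)).2 hr.2
        rw [hsr] at hrQ
        rw [if_pos hrQ]
      · have hzero : q r = 0 := if_neg hsr
        simp [hzero]
    · rw [if_neg hr]
      split_ifs <;> simp [hq]

end CausalGraph

/-- Equivalence of the original and pruned upper-bound LPs: the
optimal value of `max{ Σ_{r∈R_Q} q_r : Σ_{r∈R_{v_B.v_A}} q_r = p_{v_B.v_A} ∀(v_A,v_B), q ≥ 0 }`
equals that of `max{ Σ_{h∈H} c_h^U q_h : Σ_{h∈H: h(v_A)=v_B} q_h = p_{v_B.v_A} ∀(v_A,v_B), q ≥ 0 }`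
with `c_h^U = 1{R_h ∩ R_Q ≠ ∅}`. -/
theorem pruned_LP_upper_equiv (G : CausalGraph) (Q : G.Query)
    (p : G.AAssign → G.BAssign → ℝ) :
    (sSup {y : ℝ | ∃ q : G.Resp → ℝ, (∀ r, 0 ≤ q r) ∧
          (∀ (vA : G.AAssign) (vB : G.BAssign), setSum (G.RvBvA vA vB) q = p vA vB) ∧
          y = setSum (G.RQ Q) q} =
      sSup {y : ℝ | ∃ qh : G.Hyperarc → ℝ, (∀ h, 0 ≤ qh h) ∧
          (∀ (vA : G.AAssign) (vB : G.BAssign),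
            setSum {h ∈ G.H | h vA = vB} qh = p vA vB) ∧
          y = setSum {h ∈ G.H | (G.Rh h ∩ G.RQ Q).Nonempty} qh}) ∧
    (∀ q : G.Resp → ℝ, (∀ r, 0 ≤ q r) →
      (∀ (vA : G.AAssign) (vB : G.BAssign), setSum (G.RvBvA vA vB) q = p vA vB) →
      ∃ qh : G.Hyperarc → ℝ, (∀ h, 0 ≤ qh h) ∧
        (∀ (vA : G.AAssign) (vB : G.BAssign),
          setSum {h ∈ G.H | h vA = vB} qh = p vA vB) ∧
        setSum (G.RQ Q) q ≤ setSum {h ∈ G.H | (G.Rh h ∩ G.RQ Q).Nonempty} qh) ∧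
    (∀ qh : G.Hyperarc → ℝ, (∀ h, 0 ≤ qh h) →
      (∀ (vA : G.AAssign) (vB : G.BAssign),
        setSum {h ∈ G.H | h vA = vB} qh = p vA vB) →
      ∃ q : G.Resp → ℝ, (∀ r, 0 ≤ q r) ∧
        (∀ (vA : G.AAssign) (vB : G.BAssign), setSum (G.RvBvA vA vB) q = p vA vB) ∧
        setSum {h ∈ G.H | (G.Rh h ∩ G.RQ Q).Nonempty} qh ≤ setSum (G.RQ Q) q) := by
  have hto := G.exists_hyperarc_feasible Q p
  have hfrom := G.exists_response_feasible Q p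
  refine ⟨csSup_eq_csSup_of_forall_exists_le ?_ ?_, hto, hfrom⟩
  · rintro y ⟨q, hq, hp, rfl⟩
    obtain ⟨qh, hqh, hph, hle⟩ := hto q hq hp
    exact ⟨_, ⟨qh, hqh, hph, rfl⟩, hle⟩
  · rintro y ⟨qh, hqh, hph, rfl⟩
    obtain ⟨q, hq, hp, hle⟩ := hfrom qh hqh hph
    exact ⟨_, ⟨q, hq, hp, rfl⟩, hle⟩
end

section
/- For a valid hyperarc h: R_h ⊆ R_W if, and only if, there exists v ∈ {0,1}^{|N|} such that h(v_A) = v_B, v_{C(W)} = q_{C(W)}, and v_W = q_W. -/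
open Classical

open CausalGraph

namespace CausalGraph

/-- Iterated evaluation at `j` only depends on the context variables with a directed path to `j`. -/
theorem iterate_evalStep_congr (G : CausalGraph) {r : G.Resp} (hr : G.IsResponse r)
    {vA wA : G.AAssign} (u : Fin G.n → Bool) (k : ℕ) (j : Fin G.n)
    (hj : ∀ i : G.AIdx, Relation.ReflTransGen G.edge i.1 j → vA i = wA i) :
    (G.evalStep r vA)^[k] u j = (G.evalStep r wA)^[k] u j := by
  induction k generalizing j with
  | zero => rfl
  | succ k ih =>
    rw [Function.iterate_succ_apply', Function.iterate_succ_apply']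
    unfold evalStep
    split_ifs with hja
    · exact hj ⟨j, hja⟩ Relation.ReflTransGen.refl
    · exact hr j _ _ fun i hi => ih i fun c hc => hj c (hc.tail hi)

theorem eval_congr (G : CausalGraph) {r : G.Resp} (hr : G.IsResponse r)
    {vA wA : G.AAssign} (j : Fin G.n)
    (hj : ∀ i : G.AIdx, Relation.ReflTransGen G.edge i.1 j → vA i = wA i) :
    G.eval r vA j = G.eval r wA j :=
  G.iterate_evalStep_congr hr _ _ j hj

theorem restrictA_eval (G : CausalGraph) (r : G.Resp) (vA : G.AAssign) :
    G.restrictA (G.eval r vA) = vA := by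
  funext i
  obtain ⟨m, hm⟩ := Nat.exists_eq_succ_of_ne_zero i.1.pos.ne'
  unfold restrictA eval
  -- Rewriting `G.n` itself would be ill-typed, so only the iteration count is generalized.
  have key : ∀ k, k = m.succ → (G.evalStep r vA)^[k] (fun _ => false) i.1 = vA i := by
    rintro _ rfl
    rw [Function.iterate_succ_apply']
    simp [evalStep, i.2]
  exact key _ hm

end CausalGraph

/-- for a valid hyperarc `h`: `R_h ⊆ R_W` iff there exists
`v ∈ {0,1}^{|N|}` with `h(v_A) = v_B`, `v_{C(W)} = q_{C(W)}`, and `v_W = q_W`. -/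
theorem Rh_subset_RW_iff (G : CausalGraph) (Ob : G.Obs)
    (h : G.Hyperarc) (hh : G.Valid h) :
    G.Rh h ⊆ G.RW Ob ↔ ∃ v : Fin G.n → Bool,
      h (G.restrictA v) = G.restrictB v ∧
      (∀ i : G.AIdx, i.1 ∈ G.criticalW Ob → v i.1 = Ob.qA i) ∧
      (∀ j ∈ Ob.W, v j = Ob.qW j) := by
  constructor
  · intro hsub
    obtain ⟨r, hr⟩ := hh
    refine ⟨G.eval r Ob.qA, ?_, fun i _ => congrFun (G.restrictA_eval r Ob.qA) i, (hsub hr).2⟩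
    rw [G.restrictA_eval]
    exact (hr.2 Ob.qA).symm
  · rintro ⟨v, hv, hC, hW⟩ r ⟨hr, hrh⟩
    refine ⟨hr, fun j hj => ?_⟩
    calc G.eval r Ob.qA j = G.eval r (G.restrictA v) j :=
          G.eval_congr hr j fun i hi => (hC i ⟨i.2, j, hj, hi⟩).symm
      _ = v j := congrFun ((hrh _).trans hv) ⟨j, Ob.W_sub j hj⟩
      _ = Ob.qW j := hW j hj
end
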